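/- arXiv:1701.08949 — 2 statements merged into one kernel-verified Lean document; each statement's English description precedes it below -/
import Mathlib

section
/- Let A be a nilpotent algebra in a variety with a weak difference term and fix 0 ∈ A. Then for any congruences θ₁,…,θₙ of A, the higher commutator [θ₁,…,θₙ] equals the congruence of A generated by the set of pairs {(0, f(b₁,…,bₙ)) : f ∈ Ab^n₀ A and (0,b_i) ∈ θ_i for each i}. -/
set_option autoImplicit false

namespace UA

/-- A signature: a type of operation symbols, each with a finite arity. -/
structure Signature : Type 1 where
  ops : Type
  arity : ops → ℕ

/-- An algebra for a signature: a carrier set together with an interpretation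
of every operation symbol. -/
structure Algebra (σ : Signature) : Type 1 where
  carrier : Type
  interp : (o : σ.ops) → (Fin (σ.arity o) → carrier) → carrier

variable {σ : Signature}

/-- A congruence of an algebra: an equivalence relation compatible with all
basic operations. -/
structure Con (A : Algebra σ) : Type where
  r : A.carrier → A.carrier → Prop
  refl : ∀ a, r a a
  symm : ∀ {a b}, r a b → r b a
  trans : ∀ {a b c}, r a b → r b c → r a c
  compat : ∀ (o : σ.ops) (x y : Fin (σ.arity o) → A.carrier),
      (∀ i, r (x i) (y i)) → r (A.interp o x) (A.interp o y)

namespace Con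

variable {A : Algebra σ}

instance : LE (Con A) := ⟨fun c d => ∀ a b : A.carrier, c.r a b → d.r a b⟩
instance : LT (Con A) := ⟨fun c d => c ≤ d ∧ ¬ d ≤ c⟩

/-- The total congruence `1_A`. -/
def top : Con A where
  r := fun _ _ => True
  refl := fun _ => trivial
  symm := fun _ => trivial
  trans := fun _ _ => trivial
  compat := fun _ _ _ _ => trivial

/-- The identity congruence `0_A`. -/
def bot : Con A where
  r := fun a b => a = b
  refl := fun _ => rfl
  symm := fun h => h.symm
  trans := fun h h' => h.trans h'
  compat := fun o _ _ h => congrArg (A.interp o) (funext h)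

/-- Meet of an arbitrary family of congruences (intersection). -/
def sInf (S : Set (Con A)) : Con A where
  r a b := ∀ c ∈ S, c.r a b
  refl a c _ := c.refl a
  symm h c hc := c.symm (h c hc)
  trans h h' c hc := c.trans (h c hc) (h' c hc)
  compat o x y h c hc := c.compat o x y (fun i => h i c hc)

/-- Binary meet of congruences. -/
def inf (c d : Con A) : Con A where
  r a b := c.r a b ∧ d.r a b
  refl a := ⟨c.refl a, d.refl a⟩
  symm h := ⟨c.symm h.1, d.symm h.2⟩
  trans h h' := ⟨c.trans h.1 h'.1, d.trans h.2 h'.2⟩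
  compat o x y h := ⟨c.compat o x y fun i => (h i).1, d.compat o x y fun i => (h i).2⟩

/-- The congruence generated by a set of pairs. -/
def conGen (S : Set (A.carrier × A.carrier)) : Con A :=
  sInf {c : Con A | ∀ p ∈ S, c.r p.1 p.2}

/-- Binary join of congruences. -/
def sup (c d : Con A) : Con A := conGen {p | c.r p.1 p.2 ∨ d.r p.1 p.2}

/-- Join of a family of congruences. -/
def iSup {I : Type} (f : I → Con A) : Con A := conGen {p | ∃ i, (f i).r p.1 p.2}

/-- Composition of congruences as binary relations. -/
def comp (c d : Con A) (a b : A.carrier) : Prop := ∃ x, c.r a x ∧ d.r x b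

/-- `d` covers `c` in the congruence lattice. -/
def Covers (c d : Con A) : Prop := c < d ∧ ∀ e : Con A, c < e → e ≤ d → e = d

theorem le_sup_right {c d : Con A} : d ≤ sup c d :=
  fun a b h e he => he (a, b) (Or.inr h)

def toSetoid (c : Con A) : Setoid A.carrier := ⟨c.r, ⟨c.refl, c.symm, c.trans⟩⟩

end Con

/-- The quotient algebra `A/γ`. -/
noncomputable def quotAlg (A : Algebra σ) (γ : Con A) : Algebra σ where
  carrier := Quotient γ.toSetoid
  interp o x := Quotient.mk γ.toSetoid (A.interp o (fun i => (x i).out))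

/-- The quotient congruence `α/γ` for `γ ≤ α`. -/
noncomputable def Con.quot {A : Algebra σ} (α γ : Con A) (h : γ ≤ α) : Con (quotAlg A γ) where
  r x y := Quotient.liftOn₂ x y (fun a b => α.r a b)
    (fun a b a' b' ha hb => propext
      ⟨fun hr => α.trans (α.symm (h _ _ ha)) (α.trans hr (h _ _ hb)),
       fun hr => α.trans (h _ _ ha) (α.trans hr (α.symm (h _ _ hb)))⟩)
  refl x := Quotient.inductionOn x fun a => α.refl a
  symm {x y} h' := Quotient.inductionOn₂ x y (fun _ _ hab => α.symm hab) h'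
  trans {x y z} h1 h2 :=
    Quotient.inductionOn₃ x y z (fun _ _ _ hab hbc => α.trans hab hbc) h1 h2
  compat o x y hxy := by
    show α.r (A.interp o fun i => (x i).out) (A.interp o fun i => (y i).out)
    refine α.compat o _ _ fun i => ?_
    have h1 := hxy i
    rw [← Quotient.out_eq (x i), ← Quotient.out_eq (y i)] at h1
    exact h1

/-- The polynomial operations of an algebra: the clone generated by the basic
operations, the projections and the constants. -/
inductive IsPolynomial (A : Algebra σ) : {n : ℕ} → ((Fin n → A.carrier) → A.carrier) → Prop
  | proj {n : ℕ} (i : Fin n) : IsPolynomial A (fun x => x i)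
  | const {n : ℕ} (a : A.carrier) : IsPolynomial A (fun _ : Fin n → A.carrier => a)
  | app {n : ℕ} (o : σ.ops) (g : Fin (σ.arity o) → (Fin n → A.carrier) → A.carrier) :
      (∀ j, IsPolynomial A (g j)) → IsPolynomial A (fun x => A.interp o (fun j => g j x))

/-- Substituting, coordinatewise according to the grouping `g` and the choice
vector `ε`, the entries of `b` (where `ε` is `true`) or of `a` (where `ε` is `false`). -/
def chooseVec {β : Type} {N n : ℕ} (g : Fin N → Fin n) (a b : Fin N → β)
    (ε : Fin n → Bool) : Fin N → β :=
  fun i => if ε (g i) then b i else a i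

/-- The higher centralizer relation `C(α₁,…,αₙ,β;δ)` of Bulatov.  Polynomials with
grouped variables are modelled by a polynomial `p` of arity `N` together with a
grouping map `g : Fin N → Fin (n+1)`; the group `Fin.last n` is the `β`-group. -/
def Centralizes {A : Algebra σ} {n : ℕ} (α : Fin n → Con A) (β δ : Con A) : Prop :=
  ∀ (N : ℕ) (p : (Fin N → A.carrier) → A.carrier), IsPolynomial A p →
    ∀ (g : Fin N → Fin (n + 1)) (a b : Fin N → A.carrier),
      (∀ i, (Fin.lastCases (motive := fun _ => Con A) β α (g i)).r (a i) (b i)) →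
      (∀ ε : Fin n → Bool, ε ≠ (fun _ => true) →
        δ.r (p (chooseVec g a b (Fin.lastCases (motive := fun _ => Bool) false ε)))
            (p (chooseVec g a b (Fin.lastCases (motive := fun _ => Bool) true ε)))) →
      δ.r (p (chooseVec g a b (Fin.lastCases (motive := fun _ => Bool) false fun _ => true)))
          (p (chooseVec g a b (Fin.lastCases (motive := fun _ => Bool) true fun _ => true)))

/-- The higher commutator `[α₁,…,αₙ,β]`: the smallest congruence `δ` such that
`C(α₁,…,αₙ,β;δ)` holds. -/
def commutator {A : Algebra σ} {n : ℕ} (α : Fin n → Con A) (β : Con A) : Con A :=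
  Con.sInf {δ : Con A | Centralizes α β δ}

/-- The higher commutator of a nonempty list of congruences, with the convention
`[α] = α` for a single congruence. -/
def commList {A : Algebra σ} : {n : ℕ} → (Fin (n + 1) → Con A) → Con A
  | 0, γ => γ 0
  | (n+1), γ => commutator (fun j : Fin (n+1) => γ j.castSucc) (γ (Fin.last (n+1)))

/-- The `m`-fold commutator `[θ,…,θ]_m` (for `m ≥ 1`). -/
def nfold {A : Algebra σ} (θ : Con A) (m : ℕ) : Con A :=
  commList (fun _ : Fin (m - 1 + 1) => θ)

/-- The binary commutator `[c,d]`. -/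
def binComm {A : Algebra σ} (c d : Con A) : Con A := commutator (fun _ : Fin 1 => c) d

/-- The lower central series `(θ]ⁿ`. -/
def lcs {A : Algebra σ} (θ : Con A) : ℕ → Con A
  | 0 => θ
  | (k+1) => binComm θ (lcs θ k)

/-- The derived series `[θ]ⁿ`. -/
def derived {A : Algebra σ} (θ : Con A) : ℕ → Con A
  | 0 => θ
  | (k+1) => binComm (derived θ k) (derived θ k)

/-- An algebra is nilpotent if some term of the lower central series of `1_A` is `0_A`. -/
def Nilpotent (A : Algebra σ) : Prop := ∃ m, lcs (Con.top : Con A) m = Con.bot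

/-- An algebra is nilpotent of class `n` if `(1_A]ⁿ = 0_A`. -/
def NilpotentOfClass (A : Algebra σ) (n : ℕ) : Prop := lcs (Con.top : Con A) n = Con.bot

/-- A congruence is solvable if some term of its derived series is `0_A`. -/
def SolvableCon {A : Algebra σ} (θ : Con A) : Prop := ∃ m, derived θ m = Con.bot

/-- `A` is `n`-supernilpotent if `[1_A,…,1_A]_n = 0_A`. -/
def Supernilpotent (A : Algebra σ) (n : ℕ) : Prop := nfold (Con.top : Con A) n = Con.bot

/-- A polynomial `f` absorbs the tuple `a` to the element `c`. -/
def Absorbs (A : Algebra σ) {k : ℕ} (f : (Fin k → A.carrier) → A.carrier)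
    (a : Fin k → A.carrier) (c : A.carrier) : Prop :=
  ∀ b : Fin k → A.carrier, (∃ i, b i = a i) → f b = c

/-- Terms over a signature with variables in `X`. -/
inductive Term (σ : Signature) (X : Type) : Type
  | var : X → Term σ X
  | app : (o : σ.ops) → (Fin (σ.arity o) → Term σ X) → Term σ X

/-- Evaluation of a term in an algebra under an assignment of the variables. -/
def Term.eval {X : Type} (A : Algebra σ) (v : X → A.carrier) : Term σ X → A.carrier
  | Term.var x => v x
  | Term.app o t => A.interp o fun i => Term.eval A v (t i)

/-- Substitution of terms into a term. -/
def Term.subst {X Y : Type} : Term σ X → (X → Term σ Y) → Term σ Y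
  | Term.var x, s => s x
  | Term.app o t, s => Term.app o fun i => Term.subst (t i) s

/-- `A` possesses a Mal'cev term. -/
def HasMalcevTerm (A : Algebra σ) : Prop :=
  ∃ t : Term σ (Fin 3), ∀ a b : A.carrier,
    t.eval A ![a, b, b] = a ∧ t.eval A ![b, b, a] = a

/-- A class of algebras is a variety when it is the class of all models of a set
of identities. -/
def IsVariety (V : Algebra σ → Prop) : Prop :=
  ∃ E : Set (Term σ ℕ × Term σ ℕ),
    ∀ A : Algebra σ, V A ↔ ∀ e ∈ E, ∀ v : ℕ → A.carrier, e.1.eval A v = e.2.eval A v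

/-- Two terms are `V`-equivalent when they evaluate equally in every member of `V`. -/
def vSetoid (V : Algebra σ → Prop) (X : Type) : Setoid (Term σ X) where
  r t s := ∀ A : Algebra σ, V A → ∀ v : X → A.carrier, t.eval A v = s.eval A v
  iseqv := ⟨fun _ _ _ _ => rfl, fun h A hA v => (h A hA v).symm,
    fun h h' A hA v => (h A hA v).trans (h' A hA v)⟩

/-- The `V`-free algebra on the set `X` of generators. -/
noncomputable def freeAlg (V : Algebra σ → Prop) (X : Type) : Algebra σ where
  carrier := Quotient (vSetoid V X)
  interp o x := Quotient.mk (vSetoid V X) (Term.app o fun i => (x i).out)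

/-- The principal congruence `θ(a,b)` generated by the pair `(a,b)`. -/
def conPair (A : Algebra σ) (a b : A.carrier) : Con A := Con.conGen {(a, b)}

/-- A weak difference term for the class `V`. -/
def IsWeakDiffTerm (V : Algebra σ → Prop) (c : Term σ (Fin 3)) : Prop :=
  ∀ A : Algebra σ, V A → ∀ a b : A.carrier,
    (binComm (conPair A a b) (conPair A a b)).r (c.eval A ![a, b, b]) a ∧
    (binComm (conPair A a b) (conPair A a b)).r a (c.eval A ![b, b, a])

/-- A weak `n`-difference term for the class `V`. -/
def IsWeakNDiffTerm (V : Algebra σ → Prop) (n : ℕ) (c : Term σ (Fin 3)) : Prop :=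
  ∀ A : Algebra σ, V A → ∀ a b : A.carrier,
    (nfold (conPair A a b) n).r (c.eval A ![a, b, b]) a ∧
    (nfold (conPair A a b) n).r a (c.eval A ![b, b, a])

/-- Order-preserving maps on the congruence lattice. -/
def MonotoneCon {A : Algebra σ} (F : Con A → Con A) : Prop :=
  ∀ c d : Con A, c ≤ d → F c ≤ F d

/-- `p` is a weak `f`-term of `A` with respect to the interpretation `F`. -/
def IsWeakFTerm (A : Algebra σ) (F : Con A → Con A) (p : Term σ (Fin 3)) : Prop :=
  ∀ (θ : Con A) (a b : A.carrier), θ.r a b →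
    (F θ).r (p.eval A ![a, b, b]) a ∧ (F θ).r a (p.eval A ![b, b, a])

/-- `p` is a weak `f`-term for the class `V`. -/
def HasWeakFTermVariety (V : Algebra σ → Prop) (p : Term σ (Fin 3)) : Prop :=
  ∀ A : Algebra σ, V A → ∃ F : Con A → Con A, MonotoneCon F ∧ IsWeakFTerm A F p

/-- The set `T^θ_{n,f}(θ₁,…,θₙ)` of pairs coming from polynomials which
`f(θ)`-absorb on the cube `{ā₁,b̄₁}×⋯×{āₙ,b̄ₙ}`. -/
def TSet (A : Algebra σ) (F : Con A → Con A) (θ : Con A) {n : ℕ} (θs : Fin n → Con A) :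
    Set (A.carrier × A.carrier) :=
  {pr | ∃ (N : ℕ) (g : (Fin N → A.carrier) → A.carrier), IsPolynomial A g ∧
    ∃ (gr : Fin N → Fin n) (a b : Fin N → A.carrier),
      (∀ i, (θs (gr i)).r (a i) (b i)) ∧
      (∀ ε : Fin n → Bool, (∃ j, ε j = false) →
        (F θ).r (g (fun i => if ε (gr i) then b i else a i)) (g a)) ∧
      pr = (g b, g a)}

/-- Homomorphisms of algebras. -/
def IsHom (A B : Algebra σ) (h : A.carrier → B.carrier) : Prop :=
  ∀ (o : σ.ops) (x : Fin (σ.arity o) → A.carrier),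
    h (A.interp o x) = B.interp o (fun i => h (x i))

/-- The product of a family of algebras. -/
def prodAlg {I : Type} (As : I → Algebra σ) : Algebra σ where
  carrier := ∀ i, (As i).carrier
  interp o x i := (As i).interp o (fun j => x j i)

/-- The subuniverse generated by a subset. -/
inductive Gen (A : Algebra σ) (S : Set A.carrier) : A.carrier → Prop
  | base {a : A.carrier} : a ∈ S → Gen A S a
  | app (o : σ.ops) (x : Fin (σ.arity o) → A.carrier) :
      (∀ i, Gen A S (x i)) → Gen A S (A.interp o x)

/-- `A` possesses a Taylor term. -/
def HasTaylorTerm (A : Algebra σ) : Prop :=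
  ∃ (n : ℕ) (t : Term σ (Fin n)), 1 ≤ n ∧
    (∀ a : A.carrier, t.eval A (fun _ => a) = a) ∧
    ∀ i : Fin n, ∃ u v : Fin n → Bool, u i = true ∧ v i = false ∧
      ∀ x y : A.carrier,
        t.eval A (fun j => if u j then x else y) = t.eval A (fun j => if v j then x else y)

/-- The variety `V` possesses a Taylor term. -/
def VarietyHasTaylorTerm (V : Algebra σ → Prop) : Prop :=
  ∃ (n : ℕ) (t : Term σ (Fin n)), 1 ≤ n ∧
    (∀ A : Algebra σ, V A → ∀ a : A.carrier, t.eval A (fun _ => a) = a) ∧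
    ∀ i : Fin n, ∃ u v : Fin n → Bool, u i = true ∧ v i = false ∧
      ∀ A : Algebra σ, V A → ∀ x y : A.carrier,
        t.eval A (fun j => if u j then x else y) = t.eval A (fun j => if v j then x else y)

/-- `Ξ(θ)`: the smallest set of congruences containing `θ` and closed under
higher commutators (of arity at least 2) of its members. -/
inductive Xi {A : Algebra σ} (θ : Con A) : Con A → Prop
  | base : Xi θ θ
  | comm {k : ℕ} (γ : Fin (k + 2) → Con A) : (∀ j, Xi θ (γ j)) → Xi θ (commList γ)

/-- An expanded loop on the carrier `α` with extra operations indexed by `ι`. -/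
structure ExpLoop (ι : Type) (ar : ι → ℕ) (α : Type) : Type where
  mul : α → α → α
  ldiv : α → α → α
  rdiv : α → α → α
  zero : α
  extra : (i : ι) → (Fin (ar i) → α) → α
  ldiv_mul : ∀ x y, ldiv x (mul x y) = y
  mul_rdiv : ∀ x y, rdiv (mul x y) y = x
  mul_ldiv : ∀ x y, mul x (ldiv x y) = y
  rdiv_mul : ∀ x y, mul (rdiv x y) y = x
  zero_mul : ∀ x, mul zero x = x
  mul_zero : ∀ x, mul x zero = x

/-- Operation symbols of an expanded loop. -/
inductive LoopOp (ι : Type) : Type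
  | mul | ldiv | rdiv | zero
  | extra : ι → LoopOp ι

/-- The signature of an expanded loop. -/
@[reducible] def loopSig (ι : Type) (ar : ι → ℕ) : Signature where
  ops := LoopOp ι
  arity o := match o with
    | .mul => 2
    | .ldiv => 2
    | .rdiv => 2
    | .zero => 0
    | .extra i => ar i

/-- The algebra underlying an expanded loop. -/
def ExpLoop.toAlgebra {ι : Type} {ar : ι → ℕ} {α : Type} (L : ExpLoop ι ar α) :
    Algebra (loopSig ι ar) where
  carrier := α
  interp o := match o with
    | .mul => fun x => L.mul (x 0) (x 1)
    | .ldiv => fun x => L.ldiv (x 0) (x 1)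
    | .rdiv => fun x => L.rdiv (x 0) (x 1)
    | .zero => fun _ => L.zero
    | .extra i => L.extra i

/-- An expanded loop is of `n`-type. -/
def ExpLoop.IsNType {ι : Type} {ar : ι → ℕ} {α : Type} (L : ExpLoop ι ar α) (n : ℕ) : Prop :=
  (∀ p : Σ k : ℕ, (Fin k → α) → α,
      (∃ i : ι, p = ⟨ar i, L.extra i⟩) ↔
        (1 ≤ p.1 ∧ p.1 ≤ n - 1 ∧ IsPolynomial L.toAlgebra p.2 ∧
          Absorbs L.toAlgebra p.2 (fun _ => L.zero) L.zero)) ∧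
  (∀ f : (Fin (n - 1) → α) → α,
      IsPolynomial L.toAlgebra f → Absorbs L.toAlgebra f (fun _ => L.zero) L.zero →
      ∀ (j : Fin (n - 1)) (x : Fin (n - 1) → α) (u v : α),
        f (Function.update x j (L.mul u v)) =
          L.mul (f (Function.update x j u)) (f (Function.update x j v))) ∧
  (∀ k : ℕ, 2 ≤ k → k < n →
      commList (Fin.snoc (fun _ : Fin (n - k) => (Con.top : Con L.toAlgebra))
        (nfold Con.top k)) = Con.bot)

/-- `A` is polynomially equivalent to an `n`-type expanded loop on the same carrier. -/
def PolyEquivNTypeLoop (A : Algebra σ) (n : ℕ) : Prop :=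
  ∃ (ι : Type) (ar : ι → ℕ) (L : ExpLoop ι ar A.carrier),
    L.IsNType n ∧
    ∀ (k : ℕ) (f : (Fin k → A.carrier) → A.carrier),
      IsPolynomial A f ↔ IsPolynomial L.toAlgebra f

/-- Left-associated product of a list with initial value `c`. -/
def lprodFrom {β : Type} (mul : β → β → β) (c : β) (l : List β) : β := List.foldl mul c l

/-- Left-associated product of a list (with a default value for the empty list). -/
def lprodList {β : Type} (mul : β → β → β) (dflt : β) : List β → β
  | [] => dflt
  | a :: l => List.foldl mul a l

/-- Left-associated product of a nonempty tuple. -/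
def lassoc {β : Type} (mul : β → β → β) : {m : ℕ} → (Fin (m + 1) → β) → β
  | 0, y => y 0
  | (m+1), y => mul (lassoc mul (Fin.init y)) (y (Fin.last (m+1)))

/-- `A` has a representation of degree `n`. -/
def HasRepOfDegree (A : Algebra σ) (n : ℕ) : Prop :=
  ∃ (z : A.carrier) (r : (Fin 2 → A.carrier) → A.carrier),
    IsPolynomial A r ∧ (∀ x : A.carrier, r ![z, x] = x) ∧ (∀ x : A.carrier, r ![x, z] = x) ∧
    ∀ (k : ℕ) (f : (Fin k → A.carrier) → A.carrier), IsPolynomial A f →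
      ∃ (c : A.carrier) (R : ℕ → (Fin k → A.carrier) → A.carrier),
        (∀ m : ℕ, 1 ≤ m → m ≤ min k n →
          ∃ (l : List (Finset (Fin k)))
            (t : (S : Finset (Fin k)) → (Fin S.card → A.carrier) → A.carrier),
            l.Nodup ∧
            (∀ S : Finset (Fin k), S ∈ l ↔ S.card = m) ∧
            (∀ S ∈ l, IsPolynomial A (t S) ∧ Absorbs A (t S) (fun _ => z) z) ∧
            (∀ x : Fin k → A.carrier,
              R m x = lprodList (fun u v => r ![u, v]) z
                (l.map (fun S => t S (fun j => x ((S.orderIsoOfFin rfl j).val)))))) ∧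
        ∀ x : Fin k → A.carrier,
          f x = lprodFrom (fun u v => r ![u, v]) c
            ((List.range' 1 (min k n)).map (fun m => R m x))

/-- Products of `0`-absorbing polynomials (of arities between `lo` and `hi`)
in a given set of variables. -/
inductive ProdOfAbs {ι : Type} {ar : ι → ℕ} {α : Type} (L : ExpLoop ι ar α)
    (lo hi : ℕ) {I : Type} : ((I → α) → α) → Prop
  | base {p : ℕ} (h : (Fin p → α) → α) (sel : Fin p → I) :
      lo ≤ p → p ≤ hi → IsPolynomial L.toAlgebra h →
      Absorbs L.toAlgebra h (fun _ => L.zero) L.zero →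
      ProdOfAbs L lo hi (fun v => h (fun j => v (sel j)))
  | mul {F G : (I → α) → α} :
      ProdOfAbs L lo hi F → ProdOfAbs L lo hi G →
      ProdOfAbs L lo hi (fun v => L.mul (F v) (G v))

/-- The terms `q_m` (for `m ≥ 2`, `qSeq q (m-2)` is `q_m`):
`q₂ := q`, `q_{m+1}(x,y,z) := q(x, q_m(x,y,y), q_m(x,y,z))`. -/
def qSeq (q : Term σ (Fin 3)) : ℕ → Term σ (Fin 3)
  | 0 => q
  | (k+1) => q.subst ![Term.var 0, (qSeq q k).subst ![Term.var 0, Term.var 1, Term.var 1], qSeq q k]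


/-!
In a nilpotent algebra a weak difference polynomial can be iterated along the lower central series
until its error terms vanish. This yields a Mal'cev polynomial `q`, and the term condition then
yields a polynomial `r` inverting `q` in its first variable: `r (q x a w) a w = x`. Hence a
congruence relates `a` to `x` if and only if it relates `w` to `q x a w`, so `q · a z` is a
subtraction which moves every base point to `z`.

To see that the congruence generated by the absorbing values centralizes the `θᵢ`, first move the
bottom corner of the cube to `z`. Subtracting from a polynomial its restriction to one zeroed block
of variables makes it absorb `z` on that block; doing this for every block changes the value at the
top corner only by terms that the cube hypothesis controls. Finally, a polynomial absorbing on
blocks reduces to one absorbing in single variables, since subtracting the restriction to one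
zeroed variable shrinks a block.
-/

namespace Con

variable {A : Algebra σ}

theorem le_antisymm {c d : Con A} (hcd : c ≤ d) (hdc : d ≤ c) : c = d := by
  have hr : c.r = d.r := funext₂ fun a b => propext ⟨hcd a b, hdc a b⟩
  cases c
  cases d
  cases hr
  rfl

theorem conPair_le {a b : A.carrier} {c : Con A} (h : c.r a b) : conPair A a b ≤ c := by
  intro x y hxy
  refine hxy c ?_
  rintro _ rfl
  exact h

end Con

section Polynomials

variable {A : Algebra σ}

theorem IsPolynomial.comp {N M : ℕ} {p : (Fin N → A.carrier) → A.carrier}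
    (hp : IsPolynomial A p) {s : Fin N → (Fin M → A.carrier) → A.carrier}
    (hs : ∀ i, IsPolynomial A (s i)) : IsPolynomial A (fun y => p (fun i => s i y)) := by
  induction hp with
  | proj i => exact hs i
  | const a => exact .const a
  | app o g _ ih => exact .app o (fun j y => g j (fun i => s i y)) ih

theorem IsPolynomial.compat {N : ℕ} {p : (Fin N → A.carrier) → A.carrier}
    (hp : IsPolynomial A p) (δ : Con A) {x y : Fin N → A.carrier}
    (h : ∀ i, δ.r (x i) (y i)) : δ.r (p x) (p y) := by
  induction hp with
  | proj i => exact h i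
  | const a => exact δ.refl a
  | app o g _ ih => exact δ.compat o _ _ ih

theorem Term.isPolynomial_eval {N : ℕ} (t : Term σ (Fin N)) :
    IsPolynomial A (fun x => t.eval A x) := by
  induction t with
  | var i => exact .proj i
  | app o t ih => exact .app o (fun j x => (t j).eval A x) ih

/-- Ternary polynomials in curried form. -/
def IsPolynomial₃ (A : Algebra σ) (d : A.carrier → A.carrier → A.carrier → A.carrier) : Prop :=
  IsPolynomial A (fun x : Fin 3 → A.carrier => d (x 0) (x 1) (x 2))

variable {d : A.carrier → A.carrier → A.carrier → A.carrier}

theorem IsPolynomial₃.comp (hd : IsPolynomial₃ A d) {N : ℕ}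
    {f g h : (Fin N → A.carrier) → A.carrier} (hf : IsPolynomial A f) (hg : IsPolynomial A g)
    (hh : IsPolynomial A h) : IsPolynomial A (fun y => d (f y) (g y) (h y)) := by
  have hs : ∀ i, IsPolynomial A (![f, g, h] i) := by
    simp only [Fin.forall_fin_succ, IsEmpty.forall_iff, and_true]
    exact ⟨hf, hg, hh⟩
  exact IsPolynomial.comp hd hs

theorem IsPolynomial₃.compat (hd : IsPolynomial₃ A d) (δ : Con A) {x y x' y' x'' y'' : A.carrier}
    (h : δ.r x y) (h' : δ.r x' y') (h'' : δ.r x'' y'') : δ.r (d x x' x'') (d y y' y'') := by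
  have hs : ∀ i, δ.r (![x, x', x''] i) (![y, y', y''] i) := by
    simp only [Fin.forall_fin_succ, IsEmpty.forall_iff, and_true]
    exact ⟨h, h', h''⟩
  exact IsPolynomial.compat hd δ hs

theorem isPolynomial_piecewise_const {N : ℕ} (T : Finset (Fin N)) (z : A.carrier) (i : Fin N) :
    IsPolynomial A (fun y => T.piecewise (fun _ => z) y i) := by
  by_cases hi : i ∈ T
  · simpa only [Finset.piecewise_eq_of_mem _ _ _ hi] using .const z
  · simpa only [Finset.piecewise_eq_of_notMem _ _ _ hi] using .proj i

end Polynomials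

section Centralizers

variable {A : Algebra σ}

theorem lastCases_last_castSucc {n : ℕ} {β : Type*} (f : Fin (n + 1) → β) (i : Fin (n + 1)) :
    Fin.lastCases (motive := fun _ => β) (f (Fin.last n)) (fun j => f j.castSucc) i = f i := by
  cases i using Fin.lastCases <;> simp

theorem update_last_lastCases {n : ℕ} {β : Type*} (f : Fin n → β) (u v : β) :
    Function.update (fun i => Fin.lastCases (motive := fun _ => β) u f i) (Fin.last n) v =
      fun i => Fin.lastCases (motive := fun _ => β) v f i := by
  funext i
  cases i using Fin.lastCases <;> simp [Fin.castSucc_ne_last]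

theorem centralizes_iff {n : ℕ} {θs : Fin (n + 1) → Con A} {δ : Con A} :
    Centralizes (fun j : Fin n => θs j.castSucc) (θs (Fin.last n)) δ ↔
      ∀ (N : ℕ) (p : (Fin N → A.carrier) → A.carrier), IsPolynomial A p →
        ∀ (g : Fin N → Fin (n + 1)) (a b : Fin N → A.carrier),
          (∀ i, (θs (g i)).r (a i) (b i)) →
          (∀ ε : Fin (n + 1) → Bool, ε (Fin.last n) = true → ε ≠ (fun _ => true) →
            δ.r (p (chooseVec g a b (Function.update ε (Fin.last n) false)))
              (p (chooseVec g a b ε))) →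
          δ.r (p (chooseVec g a b (Function.update (fun _ => true) (Fin.last n) false))) (p b) := by
  have htrue : (fun i => Fin.lastCases (motive := fun _ => Bool) true (fun _ : Fin n => true) i) =
      fun _ => true := funext (lastCases_last_castSucc fun _ => true)
  have hfalse : Function.update (fun _ => true) (Fin.last n) false =
      fun i => Fin.lastCases (motive := fun _ => Bool) false (fun _ : Fin n => true) i := by
    rw [← htrue, update_last_lastCases]
  simp only [Centralizes, lastCases_last_castSucc]
  refine forall₄_congr fun N p _ g => forall₃_congr fun a b _ => imp_congr ⟨?_, ?_⟩ ?_
  · intro h ε hlast hε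
    have hext : (fun i => Fin.lastCases (motive := fun _ => Bool) true (fun j => ε j.castSucc) i) =
        ε := funext fun i => hlast ▸ lastCases_last_castSucc ε i
    rw [← hext, update_last_lastCases]
    exact h _ fun hall => hε (by rw [← hext, hall, htrue])
  · intro h ε hε
    have hrel := h (fun i => Fin.lastCases true ε i) Fin.lastCases_last fun hall =>
      hε (funext fun j => by simpa only [Fin.lastCases_castSucc] using congrFun hall j.castSucc)
    rwa [update_last_lastCases] at hrel
  · have hb : p (chooseVec g a b fun i => Fin.lastCases (motive := fun _ => Bool) true
        (fun _ : Fin n => true) i) = p b := by rw [htrue]; rfl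
    rw [hfalse, ← hb]

theorem commutator_centralizes {n : ℕ} (α : Fin n → Con A) (β : Con A) :
    Centralizes α β (commutator α β) :=
  fun N p hp g a b hab hcube δ hδ => hδ N p hp g a b hab fun ε hε => hcube ε hε δ hδ

theorem commutator_mono {n : ℕ} {α α' : Fin n → Con A} {β β' : Con A}
    (hα : ∀ i, α i ≤ α' i) (hβ : β ≤ β') : commutator α β ≤ commutator α' β' := by
  have hle (i : Fin (n + 1)) : Fin.lastCases (motive := fun _ => Con A) β α i ≤
      Fin.lastCases (motive := fun _ => Con A) β' α' i := by
    cases i using Fin.lastCases with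
    | last => simpa only [Fin.lastCases_last] using hβ
    | cast j => simpa only [Fin.lastCases_castSucc] using hα j
  exact fun x y hxy δ hδ =>
    hxy δ fun N p hp g a b hab => hδ N p hp g a b fun i => hle _ _ _ (hab i)

theorem commList_eq_commutator {n : ℕ} (θs : Fin (n + 1) → Con A) :
    commList θs = commutator (fun j : Fin n => θs j.castSucc) (θs (Fin.last n)) := by
  cases n with
  | zero =>
    refine Con.le_antisymm (fun a b hab δ hδ => ?_) fun a b hab => hab (θs 0) ?_
    · exact centralizes_iff.1 hδ 1 (fun x => x 0) (.proj 0) (fun _ => 0) (fun _ => a) (fun _ => b)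
        (fun _ => hab) fun ε hlast hε => (hε (funext fun i => by rwa [Fin.fin_one_eq_zero i])).elim
    · refine centralizes_iff.2 fun N p hp g a b hab _ => hp.compat _ fun i => ?_
      have hi := hab i
      rw [Fin.fin_one_eq_zero (g i)] at hi
      simpa [chooseVec, Fin.fin_one_eq_zero] using hi
  | succ n => rfl

theorem Centralizes.term_condition {α β δ : Con A} (h : Centralizes (fun _ : Fin 1 => α) β δ)
    {n : ℕ} {p : (Fin (n + 1) → A.carrier) → A.carrier} (hp : IsPolynomial A p) {s t : A.carrier}
    {x y : Fin n → A.carrier} (hst : α.r s t) (hxy : ∀ i, β.r (x i) (y i))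
    (hs : δ.r (p (Matrix.vecCons s x)) (p (Matrix.vecCons s y))) :
    δ.r (p (Matrix.vecCons t x)) (p (Matrix.vecCons t y)) := by
  have hchoose (ε : Fin 2 → Bool) :
      chooseVec (Fin.cons 0 fun _ => 1) (Matrix.vecCons s x) (Matrix.vecCons t y) ε =
        Matrix.vecCons (if ε 0 then t else s) (fun i => if ε 1 then y i else x i) := by
    funext i
    cases i using Fin.cases <;> rfl
  have hα : (fun _ : Fin 1 => α) = fun j : Fin 1 => ![α, β] j.castSucc :=
    funext fun j => by rw [Subsingleton.elim j 0]; rfl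
  rw [hα] at h
  have key := centralizes_iff.1 h _ p hp (Fin.cons 0 fun _ => 1) (Matrix.vecCons s x)
    (Matrix.vecCons t y) (Fin.cases hst hxy) fun ε hlast hε => ?_
  · rw [hchoose] at key
    exact key
  · have hzero : ε 0 = false := by
      by_contra hne
      exact hε (funext (Fin.forall_fin_two.2 ⟨Bool.eq_true_of_not_eq_false hne, hlast⟩))
    have hone : ε 1 = true := hlast
    rw [hchoose, hchoose]
    simpa [hzero, hone] using hs

end Centralizers

section Malcev

variable {A : Algebra σ} {d q r : A.carrier → A.carrier → A.carrier → A.carrier}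

/-- Weak difference polynomials of a single algebra, the polynomial counterpart of
`IsWeakDiffTerm`. -/
structure IsWeakDiffPolynomial (A : Algebra σ)
    (d : A.carrier → A.carrier → A.carrier → A.carrier) : Prop where
  isPolynomial : IsPolynomial₃ A d
  right : ∀ a b, (binComm (conPair A a b) (conPair A a b)).r (d a b b) a
  left : ∀ a b, (binComm (conPair A a b) (conPair A a b)).r a (d b b a)

/-- A Mal'cev polynomial `q` together with a polynomial `r` that inverts it in the first variable;
it plays the role of subtraction, `q x a w` standing for `x - a + w`. -/
structure IsCancellableMalcev (A : Algebra σ)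
    (q r : A.carrier → A.carrier → A.carrier → A.carrier) : Prop where
  isPolynomial : IsPolynomial₃ A q
  isPolynomial_inv : IsPolynomial₃ A r
  right : ∀ x y, q x y y = x
  left : ∀ x y, q y y x = x
  inv : ∀ x a w, r (q x a w) a w = x

theorem IsCancellableMalcev.inv_self (hqr : IsCancellableMalcev A q r) (a w : A.carrier) :
    r w a w = a := by
  simpa only [hqr.left] using hqr.inv a a w

theorem IsCancellableMalcev.rel_iff (hqr : IsCancellableMalcev A q r) (δ : Con A)
    {x a w : A.carrier} : δ.r w (q x a w) ↔ δ.r a x := by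
  constructor
  · intro h
    simpa only [hqr.inv_self, hqr.inv] using
      hqr.isPolynomial_inv.compat δ h (δ.refl a) (δ.refl w)
  · intro h
    simpa only [hqr.left] using hqr.isPolynomial.compat δ h (δ.refl a) (δ.refl w)

theorem IsWeakDiffTerm.isWeakDiffPolynomial {V : Algebra σ → Prop} {c : Term σ (Fin 3)}
    (hc : IsWeakDiffTerm V c) (hA : V A) :
    IsWeakDiffPolynomial A (fun x y w => c.eval A ![x, y, w]) where
  isPolynomial := by
    unfold IsPolynomial₃
    convert c.isPolynomial_eval (A := A) using 3 with x
    funext i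
    fin_cases i <;> rfl
  right a b := (hc A hA a b).1
  left a b := (hc A hA a b).2

theorem binComm_conPair_le_lcs_succ {k : ℕ} {a b : A.carrier}
    (h : (lcs (Con.top : Con A) k).r a b) :
    binComm (conPair A a b) (conPair A a b) ≤ lcs (Con.top : Con A) (k + 1) :=
  commutator_mono (fun _ _ _ _ => trivial) (Con.conPair_le h)

theorem IsWeakDiffPolynomial.lcs_succ_right (hd : IsWeakDiffPolynomial A d) {k : ℕ}
    {a b : A.carrier} (h : (lcs (Con.top : Con A) k).r a b) :
    (lcs (Con.top : Con A) (k + 1)).r (d a b b) a :=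
  binComm_conPair_le_lcs_succ h _ _ (hd.right a b)

theorem IsWeakDiffPolynomial.lcs_succ_left (hd : IsWeakDiffPolynomial A d) {k : ℕ}
    {a b : A.carrier} (h : (lcs (Con.top : Con A) k).r a b) :
    (lcs (Con.top : Con A) (k + 1)).r (d a a b) b :=
  Con.symm _ (binComm_conPair_le_lcs_succ (Con.symm _ h) _ _ (hd.left b a))

/-- Iterates of `d` for which `d x y y = x` holds up to ever smaller congruences. -/
def rightIter {X : Type*} (d : X → X → X → X) : ℕ → X → X → X → X
  | 0 => d
  | k + 1 => fun x y w => d x (rightIter d k x y y) (rightIter d k x y w)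

/-- Iterates of `d` for which `d y y x = x` holds up to ever smaller congruences. -/
def leftIter {X : Type*} (d : X → X → X → X) : ℕ → X → X → X → X
  | 0 => d
  | k + 1 => fun x y w => d (leftIter d k x y w) (leftIter d k y y w) w

/-- Iterates of the projection that invert the Mal'cev operation `q` in its first variable up to
ever smaller congruences. -/
def inverseIter {X : Type*} (q : X → X → X → X) : ℕ → X → X → X → X
  | 0 => fun x _ _ => x
  | k + 1 => fun x a w => q x (q (inverseIter q k x a w) a w) (inverseIter q k x a w)

theorem IsPolynomial₃.rightIter (hd : IsPolynomial₃ A d) (k : ℕ) :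
    IsPolynomial₃ A (rightIter d k) := by
  induction k with
  | zero => exact hd
  | succ k ih => exact hd.comp (.proj 0) (ih.comp (.proj 0) (.proj 1) (.proj 1)) ih

theorem IsPolynomial₃.leftIter (hd : IsPolynomial₃ A d) (k : ℕ) :
    IsPolynomial₃ A (leftIter d k) := by
  induction k with
  | zero => exact hd
  | succ k ih => exact hd.comp ih (ih.comp (.proj 1) (.proj 1) (.proj 2)) (.proj 2)

theorem IsPolynomial₃.inverseIter (hq : IsPolynomial₃ A q) (k : ℕ) :
    IsPolynomial₃ A (inverseIter q k) := by
  induction k with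
  | zero => exact .proj 0
  | succ k ih => exact hq.comp (.proj 0) (hq.comp ih (.proj 1) (.proj 2)) ih

theorem leftIter_right {X : Type*} {d : X → X → X → X} (hd : ∀ x y, d x y y = x) (k : ℕ)
    (x y : X) : leftIter d k x y y = x := by
  induction k generalizing x with
  | zero => exact hd x y
  | succ k ih => simp only [leftIter, ih, hd]

variable {ζ : ℕ → Con A}

theorem rightIter_right (hζ : ∀ a b, (ζ 0).r a b)
    (hd : ∀ {k a b}, (ζ k).r a b → (ζ (k + 1)).r (d a b b) a) (k : ℕ) (x y : A.carrier) :
    (ζ k).r (rightIter d k x y y) x := by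
  induction k with
  | zero => exact hζ _ _
  | succ k ih => exact hd ((ζ k).symm ih)

theorem rightIter_left (hd : IsPolynomial₃ A d)
    (hleft : ∀ {k a b}, (ζ k).r a b → (ζ (k + 1)).r (d a a b) b) (n : ℕ) {k : ℕ}
    {a b : A.carrier} (h : (ζ k).r a b) : (ζ (k + 1)).r (rightIter d n a a b) b := by
  induction n generalizing b with
  | zero => exact hleft h
  | succ n ih =>
    have hcongr : (ζ (k + 1)).r (rightIter d (n + 1) a a b) (d a a b) :=
      hd.compat _ (Con.refl _ a) (ih (Con.refl _ a)) (ih h)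
    exact Con.trans _ hcongr (hleft h)

theorem leftIter_left (hζ : ∀ a b, (ζ 0).r a b)
    (hd : ∀ {k a b}, (ζ k).r a b → (ζ (k + 1)).r (d a a b) b) (k : ℕ) (x y : A.carrier) :
    (ζ k).r (leftIter d k y y x) x := by
  induction k with
  | zero => exact hζ _ _
  | succ k ih => exact hd ih

theorem inverseIter_apply (hζ : ∀ a b, (ζ 0).r a b)
    (hcent : ∀ k, Centralizes (fun _ : Fin 1 => (Con.top : Con A)) (ζ k) (ζ (k + 1)))
    (hq : IsPolynomial₃ A q) (hright : ∀ x y, q x y y = x) (hleft : ∀ x y, q y y x = x)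
    (k : ℕ) (x a w : A.carrier) : (ζ k).r (inverseIter q k (q x a w) a w) x := by
  induction k with
  | zero => exact hζ _ _
  | succ k ih =>
    let u := inverseIter q k (q x a w) a w
    let p (y : Fin 4 → A.carrier) := q (q (y 1) (y 0) w) (q (y 2) (y 0) w) (y 3)
    have hp : IsPolynomial A p :=
      hq.comp (hq.comp (.proj 1) (.proj 0) (.const w)) (hq.comp (.proj 2) (.proj 0) (.const w))
        (.proj 3)
    have hxu : ∀ i, (ζ k).r (![x, u, u] i) (![x, x, x] i) := by
      simp only [Fin.forall_fin_succ, IsEmpty.forall_iff, and_true]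
      exact ⟨Con.refl _ x, ih, ih⟩
    have hw : (ζ (k + 1)).r (p ![w, x, u, u]) (p ![w, x, x, x]) := by
      have heq : p ![w, x, u, u] = p ![w, x, x, x] := by simp [p, hright]
      exact heq ▸ Con.refl _ _
    have ha := (hcent k).term_condition hp (t := a) trivial hxu hw
    have hax : p ![a, x, x, x] = x := hleft _ _
    rwa [hax] at ha

theorem exists_isCancellableMalcev (hd : IsWeakDiffPolynomial A d) (hA : Nilpotent A) :
    ∃ q r, IsCancellableMalcev A q r := by
  obtain ⟨M, hM⟩ := hA
  have eq_of_lcs {a b : A.carrier} (h : (lcs (Con.top : Con A) M).r a b) : a = b := by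
    rwa [hM] at h
  have htop (a b : A.carrier) : (lcs (Con.top : Con A) 0).r a b := trivial
  let e := rightIter d M
  have he : IsPolynomial₃ A e := hd.isPolynomial.rightIter M
  have he_left {k : ℕ} {a b : A.carrier} :
      (lcs (Con.top : Con A) k).r a b → (lcs (Con.top : Con A) (k + 1)).r (e a a b) b :=
    rightIter_left (ζ := lcs Con.top) hd.isPolynomial hd.lcs_succ_left M
  have he_right (x y : A.carrier) : e x y y = x :=
    eq_of_lcs (rightIter_right htop hd.lcs_succ_right M x y)
  let q := leftIter e M
  have hq : IsPolynomial₃ A q := he.leftIter M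
  have hq_right : ∀ x y, q x y y = x := leftIter_right he_right M
  have hq_left (x y : A.carrier) : q y y x = x := eq_of_lcs (leftIter_left htop he_left M x y)
  refine ⟨q, inverseIter q M, hq, hq.inverseIter M, hq_right, hq_left, fun x a w => eq_of_lcs ?_⟩
  exact inverseIter_apply htop (fun k => commutator_centralizes _ _) hq hq_right hq_left M x a w

end Malcev

section Differences

/-- `P` takes the value `z` at every point whose coordinates in `T` are all `z`. This is absorption
of `z` in the block of variables `T`. -/
def AbsorbsOn {ι X : Type*} (P : (ι → X) → X) (z : X) (T : Finset ι) : Prop :=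
  ∀ y : ι → X, (∀ i ∈ T, y i = z) → P y = z

/-- The difference, in the sense of the Mal'cev operation `q`, between `P` and its restriction to
the points whose coordinates in `T` are set to `z`. -/
def diffOp {ι X : Type*} [DecidableEq ι] (q : X → X → X → X) (z : X) (T : Finset ι)
    (P : (ι → X) → X) (y : ι → X) : X :=
  q (P y) (P (T.piecewise (fun _ => z) y)) z

variable {ι X : Type*} {q : X → X → X → X} {z : X} {P : (ι → X) → X} {T U : Finset ι}

theorem AbsorbsOn.mono (hP : AbsorbsOn P z T) (hTU : T ⊆ U) : AbsorbsOn P z U :=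
  fun y hy => hP y fun i hi => hy i (hTU hi)

variable [DecidableEq ι]

theorem AbsorbsOn.comp_piecewise (hP : AbsorbsOn P z U) (T : Finset ι) :
    AbsorbsOn (fun y => P (T.piecewise (fun _ => z) y)) z (U \ T) := by
  refine fun y hy => hP _ fun i hi => ?_
  by_cases hT : i ∈ T
  · exact Finset.piecewise_eq_of_mem _ _ _ hT
  · rw [Finset.piecewise_eq_of_notMem _ _ _ hT, hy i (Finset.mem_sdiff.2 ⟨hi, hT⟩)]

theorem absorbsOn_diffOp_self (hq : ∀ x y, q y y x = x) (P : (ι → X) → X) (T : Finset ι) :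
    AbsorbsOn (diffOp q z T P) z T := by
  intro y hy
  have hpiecewise : T.piecewise (fun _ => z) y = y := by
    funext i
    by_cases hi : i ∈ T
    · rw [Finset.piecewise_eq_of_mem _ _ _ hi, hy i hi]
    · exact Finset.piecewise_eq_of_notMem _ _ _ hi
  rw [diffOp, hpiecewise, hq]

theorem AbsorbsOn.diffOp (hq : ∀ x y, q y y x = x) (hP : AbsorbsOn P z U) (T : Finset ι) :
    AbsorbsOn (diffOp q z T P) z U := by
  intro y hy
  have hrestrict : P (T.piecewise (fun _ => z) y) = z :=
    (hP.comp_piecewise T).mono Finset.sdiff_subset y hy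
  rw [UA.diffOp, hP y hy, hrestrict, hq]

theorem AbsorbsOn.foldr_diffOp (hq : ∀ x y, q y y x = x) (hP : AbsorbsOn P z U)
    (Ts : List (Finset ι)) : AbsorbsOn (Ts.foldr (UA.diffOp q z) P) z U := by
  induction Ts with
  | nil => exact hP
  | cons T Ts ih => exact ih.diffOp hq T

theorem absorbsOn_foldr_diffOp_of_mem (hq : ∀ x y, q y y x = x) (P : (ι → X) → X)
    {Ts : List (Finset ι)} (hT : T ∈ Ts) : AbsorbsOn (Ts.foldr (diffOp q z) P) z T := by
  induction Ts with
  | nil => cases hT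
  | cons T' Ts ih =>
    rcases List.mem_cons.1 hT with rfl | hT
    · exact absorbsOn_diffOp_self hq _ _
    · exact (ih hT).diffOp hq T'

end Differences

section PolynomialDifferences

variable {A : Algebra σ} {q : A.carrier → A.carrier → A.carrier → A.carrier} {z : A.carrier}

theorem IsPolynomial₃.diffOp (hq : IsPolynomial₃ A q) {N : ℕ} {P : (Fin N → A.carrier) → A.carrier}
    (hP : IsPolynomial A P) (T : Finset (Fin N)) : IsPolynomial A (diffOp q z T P) :=
  hq.comp hP (hP.comp (isPolynomial_piecewise_const T z)) (.const z)

theorem IsPolynomial₃.foldr_diffOp (hq : IsPolynomial₃ A q) {N : ℕ}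
    {P : (Fin N → A.carrier) → A.carrier} (hP : IsPolynomial A P) (Ts : List (Finset (Fin N))) :
    IsPolynomial A (Ts.foldr (UA.diffOp q z) P) := by
  induction Ts with
  | nil => exact hP
  | cons T Ts ih => exact hq.diffOp ih T

theorem rel_foldr_diffOp {ι : Type*} [DecidableEq ι] {δ : Con A} (hq : IsPolynomial₃ A q)
    (hright : ∀ x y, q x y y = x) {P : (ι → A.carrier) → A.carrier} {W : Set (ι → A.carrier)}
    {Ts : List (Finset ι)}
    (hW : ∀ T ∈ Ts, ∀ y ∈ W, T.piecewise (fun _ => z) y ∈ W)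
    (hP : ∀ T ∈ Ts, ∀ y ∈ W, δ.r (P (T.piecewise (fun _ => z) y)) z) :
    ∀ y ∈ W, δ.r (Ts.foldr (diffOp q z) P y) (P y) := by
  induction Ts with
  | nil => exact fun y _ => δ.refl _
  | cons T Ts ih =>
    rw [List.forall_mem_cons] at hW hP
    intro y hy
    have hfold := ih hW.2 hP.2
    have hrestrict := δ.trans (hfold _ (hW.1 y hy)) (hP.1 y hy)
    have hdiff := hq.compat δ (hfold y hy) hrestrict (δ.refl z)
    rwa [hright] at hdiff

end PolynomialDifferences

section AbsorbingPairs

variable {A : Algebra σ} {q r : A.carrier → A.carrier → A.carrier → A.carrier} {z : A.carrier}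
  {δ : Con A}

/-- The pairs `(z, f b)` with `f` a polynomial absorbing at `z` and `b i` congruent to `z` modulo
`θs i`. -/
def absorbingPairs (z : A.carrier) {m : ℕ} (θs : Fin m → Con A) : Set (A.carrier × A.carrier) :=
  {pr | ∃ (f : (Fin m → A.carrier) → A.carrier) (b : Fin m → A.carrier),
    IsPolynomial A f ∧ Absorbs A f (fun _ => z) z ∧ (∀ i, (θs i).r z (b i)) ∧ pr = (z, f b)}

theorem rel_of_absorbsOn_subsingleton {m : ℕ} {θs : Fin m → Con A}
    (hδ : ∀ pr ∈ absorbingPairs z θs, δ.r pr.1 pr.2) {N : ℕ} {g : Fin N → Fin m}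
    {b : Fin N → A.carrier} (hb : ∀ i, (θs (g i)).r z (b i)) {S : Fin m → Finset (Fin N)}
    (hS : ∀ j, ∀ i ∈ S j, g i = j) (hsub : ∀ j, (S j : Set (Fin N)).Subsingleton)
    {P : (Fin N → A.carrier) → A.carrier} (hP : IsPolynomial A P)
    (habs : ∀ j, AbsorbsOn P z (S j)) : δ.r z (P b) := by
  by_cases hne : ∀ j, (S j).Nonempty
  · choose s hs using hne
    let merge (x : Fin m → A.carrier) (i : Fin N) : A.carrier :=
      if i = s (g i) then x (g i) else b i
    have hmerge (i : Fin N) : IsPolynomial A (fun x => merge x i) := by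
      by_cases hi : i = s (g i)
      · simpa only [merge, if_pos hi] using .proj (g i)
      · simpa only [merge, if_neg hi] using .const (b i)
    have hmerge_b : merge (fun j => b (s j)) = b := by
      funext i
      by_cases hi : i = s (g i)
      · simp only [merge, ← hi, if_true]
      · simp only [merge, if_neg hi]
    have hpair :=
      hδ _ ⟨fun x => P (merge x), fun j => b (s j), hP.comp hmerge, ?_, fun j => ?_, rfl⟩
    · simpa only [hmerge_b] using hpair
    · rintro x ⟨j, hj⟩
      refine habs j _ fun i hi => ?_
      obtain rfl := hS j i hi
      simp only [merge, if_pos (hsub _ hi (hs _)), hj]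
    · simpa only [hS j _ (hs j)] using hb (s j)
  · push Not at hne
    obtain ⟨j, hj⟩ := hne
    rw [habs j b (by simp [hj])]
    exact δ.refl z

theorem rel_of_absorbsOn (hqr : IsCancellableMalcev A q r) {m : ℕ} {θs : Fin m → Con A}
    (hδ : ∀ pr ∈ absorbingPairs z θs, δ.r pr.1 pr.2) {N : ℕ} {g : Fin N → Fin m}
    {b : Fin N → A.carrier} (hb : ∀ i, (θs (g i)).r z (b i)) {S : Fin m → Finset (Fin N)}
    (hS : ∀ j, ∀ i ∈ S j, g i = j) {P : (Fin N → A.carrier) → A.carrier} (hP : IsPolynomial A P)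
    (habs : ∀ j, AbsorbsOn P z (S j)) : δ.r z (P b) := by
  induction S using WellFoundedLT.induction generalizing P with
  | ind S ih =>
    by_cases hsub : ∀ j, (S j : Set (Fin N)).Subsingleton
    · exact rel_of_absorbsOn_subsingleton hδ hb hS hsub hP habs
    simp only [not_forall, Set.not_subsingleton_iff] at hsub
    obtain ⟨j, hj : (S j).Nontrivial⟩ := hsub
    obtain ⟨i, hi⟩ := hj.nonempty
    have shrink {T : Finset (Fin N)} {Q : (Fin N → A.carrier) → A.carrier} (hT : T ⊂ S j)
        (hQ : IsPolynomial A Q) (hQT : AbsorbsOn Q z T) (hQS : ∀ l, AbsorbsOn Q z (S l)) :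
        δ.r z (Q b) := by
      have hlt : Function.update S j T < S := update_lt_self_iff.2 hT
      exact ih _ hlt (fun l k hk => hS l k (hlt.le l hk)) hQ
        ((Function.forall_update_iff S fun _ U => AbsorbsOn Q z U).2 ⟨hQT, fun l _ => hQS l⟩)
    have hrestrict : δ.r z (P (({i} : Finset (Fin N)).piecewise (fun _ => z) b)) :=
      shrink (Finset.sdiff_ssubset (Finset.singleton_subset_iff.2 hi) ⟨i, by simp⟩)
        (hP.comp (isPolynomial_piecewise_const {i} z)) ((habs j).comp_piecewise {i})
        fun l => ((habs l).comp_piecewise {i}).mono Finset.sdiff_subset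
    have hdiff : δ.r z (diffOp q z {i} P b) :=
      shrink ((Finset.singleton_subset_iff.2 hi).ssubset_of_ne hj.ne_singleton.symm)
        (hqr.isPolynomial.diffOp hP {i}) (absorbsOn_diffOp_self hqr.left P {i})
        fun l => (habs l).diffOp hqr.left {i}
    exact δ.trans hrestrict ((hqr.rel_iff δ).1 hdiff)

/-- The block of variables labelled `j` by the grouping `g`. -/
def block {N n : ℕ} (g : Fin N → Fin n) (j : Fin n) : Finset (Fin N) :=
  Finset.univ.filter (fun i => g i = j)

theorem piecewise_block_chooseVec {X : Type} {N n : ℕ} (g : Fin N → Fin n) (a b : Fin N → X)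
    (ε : Fin n → Bool) (j : Fin n) :
    (block g j).piecewise a (chooseVec g a b ε) = chooseVec g a b (Function.update ε j false) := by
  funext i
  by_cases hi : g i = j
  · simp [block, Finset.piecewise, chooseVec, hi]
  · simp [block, Finset.piecewise, chooseVec, hi]

theorem rel_foldr_diffOp_block (hq : IsPolynomial₃ A q) (hright : ∀ x y, q x y y = x) {m N : ℕ}
    {g : Fin N → Fin (m + 1)} {b : Fin N → A.carrier} {P : (Fin N → A.carrier) → A.carrier}
    (hP : ∀ ε : Fin (m + 1) → Bool, ε (Fin.last m) = true → ε ≠ (fun _ => true) →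
      δ.r (P (chooseVec g (fun _ => z) b ε)) z) :
    δ.r ((List.ofFn fun j : Fin m => block g j.castSucc).foldr (diffOp q z) P b) (P b) := by
  let W := {y | ∃ ε : Fin (m + 1) → Bool,
    ε (Fin.last m) = true ∧ y = chooseVec g (fun _ => z) b ε}
  refine rel_foldr_diffOp hq hright (W := W) ?_ ?_ b ⟨fun _ => true, rfl, rfl⟩
  · intro T hT y hy
    obtain ⟨j, rfl⟩ := List.mem_ofFn.1 hT
    obtain ⟨ε, hlast, rfl⟩ := hy
    refine ⟨Function.update ε j.castSucc false, ?_, piecewise_block_chooseVec g _ b ε _⟩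
    rwa [Function.update_of_ne j.castSucc_ne_last.symm]
  · intro T hT y hy
    obtain ⟨j, rfl⟩ := List.mem_ofFn.1 hT
    obtain ⟨ε, hlast, rfl⟩ := hy
    rw [piecewise_block_chooseVec]
    refine hP _ ?_ fun hall => ?_
    · rwa [Function.update_of_ne j.castSucc_ne_last.symm]
    · exact absurd (congrFun hall j.castSucc) (by simp)

theorem rel_of_cube_rel (hqr : IsCancellableMalcev A q r) {m : ℕ} {θs : Fin (m + 1) → Con A}
    (hδ : ∀ pr ∈ absorbingPairs z θs, δ.r pr.1 pr.2) {N : ℕ} {g : Fin N → Fin (m + 1)}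
    {b : Fin N → A.carrier} (hb : ∀ i, (θs (g i)).r z (b i))
    {P : (Fin N → A.carrier) → A.carrier} (hP : IsPolynomial A P)
    (hcube : ∀ ε : Fin (m + 1) → Bool, ε (Fin.last m) = true → ε ≠ (fun _ => true) →
      δ.r (P (chooseVec g (fun _ => z) b (Function.update ε (Fin.last m) false)))
        (P (chooseVec g (fun _ => z) b ε))) :
    δ.r (P (chooseVec g (fun _ => z) b (Function.update (fun _ => true) (Fin.last m) false)))
      (P b) := by
  let G := diffOp q z (block g (Fin.last m)) P
  let Ts := List.ofFn fun j : Fin m => block g j.castSucc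
  have hG (ε : Fin (m + 1) → Bool) : G (chooseVec g (fun _ => z) b ε) =
      q (P (chooseVec g (fun _ => z) b ε))
        (P (chooseVec g (fun _ => z) b (Function.update ε (Fin.last m) false))) z := by
    simp only [G, diffOp, piecewise_block_chooseVec]
  have habs (j : Fin (m + 1)) : AbsorbsOn (Ts.foldr (diffOp q z) G) z (block g j) := by
    cases j using Fin.lastCases with
    | last => exact (absorbsOn_diffOp_self hqr.left P _).foldr_diffOp hqr.left Ts
    | cast j => exact absorbsOn_foldr_diffOp_of_mem hqr.left G (List.mem_ofFn.2 ⟨j, rfl⟩)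
  have hfold : δ.r z (Ts.foldr (diffOp q z) G b) :=
    rel_of_absorbsOn hqr hδ hb (fun j i hi => (Finset.mem_filter.1 hi).2)
      (hqr.isPolynomial.foldr_diffOp (hqr.isPolynomial.diffOp hP _) Ts) habs
  have hG_rel (ε : Fin (m + 1) → Bool) (hlast : ε (Fin.last m) = true) (hε : ε ≠ fun _ => true) :
      δ.r (G (chooseVec g (fun _ => z) b ε)) z := by
    rw [hG]
    exact δ.symm ((hqr.rel_iff δ).2 (hcube ε hlast hε))
  have hGb := δ.trans hfold (rel_foldr_diffOp_block hqr.isPolynomial hqr.right hG_rel)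
  exact (hqr.rel_iff δ).1 ((hG fun _ => true) ▸ hGb)

theorem centralizes_of_absorbingPairs (hqr : IsCancellableMalcev A q r) {m : ℕ}
    {θs : Fin (m + 1) → Con A} (hδ : ∀ pr ∈ absorbingPairs z θs, δ.r pr.1 pr.2) :
    Centralizes (fun j : Fin m => θs j.castSucc) (θs (Fin.last m)) δ := by
  refine centralizes_iff.2 fun N p hp g a b hab hcube => ?_
  let b' (i : Fin N) := q (b i) (a i) z
  let P (y : Fin N → A.carrier) := p (fun i => r (y i) (a i) z)
  have hP : IsPolynomial A P :=
    hp.comp fun i => hqr.isPolynomial_inv.comp (.proj i) (.const (a i)) (.const z)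
  have hvertex (ε : Fin (m + 1) → Bool) :
      P (chooseVec g (fun _ => z) b' ε) = p (chooseVec g a b ε) := by
    refine congrArg p (funext fun i => ?_)
    by_cases hi : ε (g i) = true
    · simp [chooseVec, hi, b', hqr.inv]
    · simp [chooseVec, hi, hqr.inv_self]
  have htop : P b' = p b := hvertex fun _ => true
  have key := rel_of_cube_rel hqr hδ (fun i => (hqr.rel_iff _).2 (hab i)) hP
    fun ε hlast hε => by
      rw [hvertex, hvertex]
      exact hcube ε hlast hε
  rwa [hvertex, htop] at key

theorem rel_of_mem_absorbingPairs {m : ℕ} {θs : Fin (m + 1) → Con A}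
    (h : Centralizes (fun j : Fin m => θs j.castSucc) (θs (Fin.last m)) δ)
    {pr : A.carrier × A.carrier} (hpr : pr ∈ absorbingPairs z θs) : δ.r pr.1 pr.2 := by
  obtain ⟨f, b, hf, habs, hb, rfl⟩ := hpr
  have hvertex {ε : Fin (m + 1) → Bool} {j : Fin (m + 1)} (hj : ε j = false) :
      f (chooseVec id (fun _ => z) b ε) = z :=
    habs _ ⟨j, by simp [chooseVec, hj]⟩
  have key := centralizes_iff.1 h _ f hf id (fun _ => z) b hb fun ε _ hε => ?_
  · rwa [hvertex (Function.update_self ..)] at key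
  · obtain ⟨j, hj⟩ := Function.ne_iff.1 hε
    rw [hvertex (Function.update_self ..), hvertex (Bool.eq_false_of_not_eq_true hj)]
    exact δ.refl z

end AbsorbingPairs

theorem nilpotent_commutator_generators_general {A : Algebra σ}
    {d : A.carrier → A.carrier → A.carrier → A.carrier} (hd : IsWeakDiffPolynomial A d)
    (hnil : Nilpotent A) (z : A.carrier) {m : ℕ} (θs : Fin (m + 1) → Con A) :
    commList θs = Con.conGen (absorbingPairs z θs) := by
  obtain ⟨q, r, hqr⟩ := exists_isCancellableMalcev hd hnil
  rw [commList_eq_commutator]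
  exact congrArg Con.sInf <| Set.ext fun δ =>
    ⟨fun h _ => rel_of_mem_absorbingPairs h, centralizes_of_absorbingPairs hqr⟩

/-- Lemma 3.11 of "On Supernilpotent Algebras": in a nilpotent algebra of a
variety with a weak difference term, the higher commutator `[θ₁,…,θₙ]` is
generated by the pairs `(0, f(b₁,…,bₙ))` with `f` an `n`-ary `0`-absorbing
polynomial and `(0, bᵢ) ∈ θᵢ`. -/
theorem nilpotent_commutator_generators {σ : Signature} (V : Algebra σ → Prop)
    (hV : IsVariety V) (c : Term σ (Fin 3)) (hc : IsWeakDiffTerm V c)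
    (A : Algebra σ) (hA : V A) (hnil : Nilpotent A) (z : A.carrier)
    {m : ℕ} (θs : Fin (m + 1) → Con A) :
    commList θs = Con.conGen {pr : A.carrier × A.carrier |
      ∃ (f : (Fin (m + 1) → A.carrier) → A.carrier) (b : Fin (m + 1) → A.carrier),
        IsPolynomial A f ∧ Absorbs A f (fun _ => z) z ∧
        (∀ i, (θs i).r z (b i)) ∧ pr = (z, f b)} := by
  exact nilpotent_commutator_generators_general (hc.isWeakDiffPolynomial hA) hnil z θs

end UA
end

section
/- Let V be a variety and n ≥ 2. The following are equivalent: (1) [θ(x,y),…,θ(x,y)]_n < θ(x,y) in the congruence lattice of the free V-algebra F_V(2) on two generators x,y, where θ(x,y) denotes the congruence generated by the pair (x,y); (2) V contains an algebra with a proper n-supernilpotent interval in its congruence lattice, i.e., some A ∈ V has congruences α < β with [β,…,β]_n ≤ α. -/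
set_option autoImplicit false

namespace UA

variable {σ : Signature}

/-! If `(x, y)` lies in `[θ(x,y),…,θ(x,y)]_n`, then this membership transfers to every pair `(a, b)`
of every congruence `β` of every `A ∈ V`: the homomorphism `F_V(2) → A` with `x ↦ a` and `y ↦ b`
maps `θ(x,y)` into `β`, and homomorphisms carry higher commutators into higher commutators, so
`(a, b) ∈ [β,…,β]_n`. Thus `[β,…,β]_n = β` throughout `V`, which rules out proper
`n`-supernilpotent intervals. -/

section Commutator

variable {A B : Algebra σ} {n : ℕ}

/-- The preimage of a congruence under a homomorphism. -/
def Con.comap {h : A.carrier → B.carrier} (hh : IsHom A B h) (β : Con B) : Con A where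
  r a b := β.r (h a) (h b)
  refl _ := β.refl _
  symm := β.symm
  trans := β.trans
  compat o x y hxy := by
    rw [hh, hh]
    exact β.compat o _ _ hxy

theorem conPair_le_iff {x y : A.carrier} {β : Con A} : conPair A x y ≤ β ↔ β.r x y := by
  refine ⟨fun hle => hle x y fun _ hc => hc (x, y) rfl, fun hxy a b hab => hab β ?_⟩
  rintro _ rfl
  exact hxy

theorem conPair_rel (x y : A.carrier) : (conPair A x y).r x y :=
  conPair_le_iff.1 fun _ _ => id

theorem IsPolynomial.rel {p : (Fin n → A.carrier) → A.carrier} (hp : IsPolynomial A p)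
    (θ : Con A) {x y : Fin n → A.carrier} (hxy : ∀ i, θ.r (x i) (y i)) : θ.r (p x) (p y) := by
  induction hp with
  | proj i => exact hxy i
  | const a => exact θ.refl a
  | app o g _ ih => exact θ.compat o _ _ ih

theorem IsPolynomial.exists_semiconj {p : (Fin n → A.carrier) → A.carrier}
    (hp : IsPolynomial A p) {h : A.carrier → B.carrier} (hh : IsHom A B h) :
    ∃ q : (Fin n → B.carrier) → B.carrier, IsPolynomial B q ∧ ∀ x, h (p x) = q (h ∘ x) := by
  induction hp with
  | proj i => exact ⟨_, .proj i, fun _ => rfl⟩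
  | const a => exact ⟨_, .const (h a), fun _ => rfl⟩
  | app o g _ ih =>
    choose q hq hpq using ih
    refine ⟨_, .app o q hq, fun x => ?_⟩
    rw [hh]
    exact congrArg (B.interp o) (funext fun j => hpq j x)

theorem comp_chooseVec {α β : Type} {N : ℕ} (h : α → β) (g : Fin N → Fin n) (a b : Fin N → α)
    (ε : Fin n → Bool) : h ∘ chooseVec g a b ε = chooseVec g (h ∘ a) (h ∘ b) ε :=
  funext fun i => apply_ite h (ε (g i) = true) (b i) (a i)

theorem Centralizes.comap {h : A.carrier → B.carrier} (hh : IsHom A B h)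
    {α : Fin n → Con A} {β : Con A} {α' : Fin n → Con B} {β' δ : Con B}
    (hα : ∀ j, α j ≤ (α' j).comap hh) (hβ : β ≤ β'.comap hh) (hδ : Centralizes α' β' δ) :
    Centralizes α β (δ.comap hh) := by
  intro N p hp g a b hab hε
  obtain ⟨q, hq, hpq⟩ := hp.exists_semiconj hh
  simp only [Con.comap, hpq, comp_chooseVec] at hε ⊢
  refine hδ N q hq g _ _ (fun i => ?_) hε
  have hi := hab i
  generalize g i = k at hi ⊢
  cases k using Fin.lastCases with
  | last =>
    rw [Fin.lastCases_last] at hi ⊢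
    exact hβ _ _ hi
  | cast j =>
    rw [Fin.lastCases_castSucc] at hi ⊢
    exact hα j _ _ hi

theorem commutator_le_comap {h : A.carrier → B.carrier} (hh : IsHom A B h)
    {α : Fin n → Con A} {β : Con A} {α' : Fin n → Con B} {β' : Con B}
    (hα : ∀ j, α j ≤ (α' j).comap hh) (hβ : β ≤ β'.comap hh) :
    commutator α β ≤ (commutator α' β').comap hh :=
  fun _ _ hab δ hδ => hab (δ.comap hh) (hδ.comap hh hα hβ)

theorem commList_le_comap {h : A.carrier → B.carrier} (hh : IsHom A B h)
    {γ : Fin (n + 1) → Con A} {γ' : Fin (n + 1) → Con B} (hγ : ∀ j, γ j ≤ (γ' j).comap hh) :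
    commList γ ≤ (commList γ').comap hh := by
  cases n with
  | zero => exact hγ 0
  | succ n => exact commutator_le_comap hh (fun j => hγ j.castSucc) (hγ (Fin.last _))

theorem centralizes_self (α : Fin n → Con A) (β : Con A) : Centralizes α β β := by
  intro N p hp g a b hab _
  refine hp.rel β fun i => ?_
  have hi := hab i
  unfold chooseVec
  generalize g i = k at hi ⊢
  cases k using Fin.lastCases with
  | last => simpa using hi
  | cast j => simpa using β.refl _

theorem commutator_le_right (α : Fin n → Con A) (β : Con A) : commutator α β ≤ β :=
  fun _ _ hab => hab β (centralizes_self α β)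

theorem commList_le_last (γ : Fin (n + 1) → Con A) : commList γ ≤ γ (Fin.last n) := by
  cases n with
  | zero => exact fun _ _ => id
  | succ n => exact commutator_le_right _ _

end Commutator

section FreeAlgebra

variable {V : Algebra σ → Prop} {X Y : Type} {A : Algebra σ}

theorem Term.eval_subst (v : Y → A.carrier) (s : X → Term σ Y) (t : Term σ X) :
    (t.subst s).eval A v = t.eval A fun x => (s x).eval A v := by
  induction t with
  | var x => rfl
  | app o t ih => exact congrArg (A.interp o) (funext ih)

theorem freeAlg_interp_mk (o : σ.ops) (t : Fin (σ.arity o) → Term σ X) :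
    (freeAlg V X).interp o (fun i => Quotient.mk (vSetoid V X) (t i)) =
      Quotient.mk (vSetoid V X) (Term.app o t) :=
  Quotient.sound fun A hA v =>
    congrArg (A.interp o) (funext fun i => Quotient.mk_out (s := vSetoid V X) (t i) A hA v)

theorem Term.eval_freeAlg (s : X → Term σ Y) (t : Term σ X) :
    t.eval (freeAlg V Y) (fun x => Quotient.mk (vSetoid V Y) (s x)) =
      Quotient.mk (vSetoid V Y) (t.subst s) := by
  induction t with
  | var x => rfl
  | app o t ih =>
    exact (congrArg ((freeAlg V Y).interp o) (funext ih)).trans (freeAlg_interp_mk o _)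

theorem IsVariety.freeAlg_mem (hV : IsVariety V) (X : Type) : V (freeAlg V X) := by
  obtain ⟨E, hE⟩ := hV
  refine (hE _).2 fun e he v => ?_
  obtain ⟨s, rfl⟩ : ∃ s : ℕ → Term σ X, (fun i => Quotient.mk (vSetoid V X) (s i)) = v :=
    ⟨fun i => (v i).out, funext fun i => Quotient.out_eq (v i)⟩
  rw [Term.eval_freeAlg, Term.eval_freeAlg]
  refine Quotient.sound fun B hB w => ?_
  rw [Term.eval_subst, Term.eval_subst]
  exact (hE B).1 hB e he _

/-- The free generator of `F_V(X)` attached to `x : X`. -/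
def freeGen (V : Algebra σ → Prop) (x : X) : (freeAlg V X).carrier :=
  Quotient.mk (vSetoid V X) (Term.var x)

/-- The extension of an assignment `v : X → A`, for `A ∈ V`, to a homomorphism `F_V(X) → A`. -/
def freeLift (hA : V A) (v : X → A.carrier) : (freeAlg V X).carrier → A.carrier :=
  Quotient.lift (fun t : Term σ X => t.eval A v) fun _ _ hts => hts A hA v

theorem isHom_freeLift (hA : V A) (v : X → A.carrier) :
    IsHom (freeAlg V X) A (freeLift hA v) := by
  intro o u
  obtain ⟨t, rfl⟩ : ∃ t : Fin (σ.arity o) → Term σ X,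
      (fun i => Quotient.mk (vSetoid V X) (t i)) = u :=
    ⟨fun i => (u i).out, funext fun i => Quotient.out_eq (u i)⟩
  rw [freeAlg_interp_mk]
  rfl

theorem le_nfold_of_freeGen_rel {n : ℕ}
    (hxy : (nfold (conPair (freeAlg V (Fin 2)) (freeGen V 0) (freeGen V 1)) n).r
      (freeGen V 0) (freeGen V 1))
    (hA : V A) (β : Con A) : β ≤ nfold β n := by
  intro a b hab
  have hhom : IsHom (freeAlg V (Fin 2)) A (freeLift hA ![a, b]) := isHom_freeLift hA _
  have hθ : conPair (freeAlg V (Fin 2)) (freeGen V 0) (freeGen V 1) ≤ β.comap hhom :=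
    conPair_le_iff.2 hab
  exact commList_le_comap hhom (fun _ => hθ) _ _ hxy

end FreeAlgebra

/-- Every quasivariety contains its two-generated free algebra. The arity is written `n + 1` because
`nfold` truncates arity `0` to arity `1`. -/
theorem free_algebra_supernilpotent_interval_general (V : Algebra σ → Prop)
    (hF : V (freeAlg V (Fin 2))) (n : ℕ) :
    nfold (conPair (freeAlg V (Fin 2)) (freeGen V 0) (freeGen V 1)) (n + 1) <
        conPair (freeAlg V (Fin 2)) (freeGen V 0) (freeGen V 1) ↔
      ∃ A : Algebra σ, V A ∧ ∃ α β : Con A, α < β ∧ nfold β (n + 1) ≤ α := by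
  constructor
  · exact fun hlt => ⟨_, hF, _, _, hlt, fun _ _ => id⟩
  · rintro ⟨A, hA, α, β, ⟨_, hβα⟩, hα⟩
    refine ⟨commList_le_last _, fun hθ => hβα fun a b hab => hα a b ?_⟩
    have hxy := hθ _ _ (conPair_rel (freeGen V 0) (freeGen V 1))
    exact le_nfold_of_freeGen_rel hxy hA β a b hab

/-- Lemma 4.1 of "On Supernilpotent Algebras": for a variety `V` and `n ≥ 2`,
`[θ(x,y),…,θ(x,y)]_n < θ(x,y)` in `Con F_V(2)` iff `V` contains an algebra with a
proper `n`-supernilpotent interval in its congruence lattice. -/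
theorem free_algebra_supernilpotent_interval {σ : Signature} (V : Algebra σ → Prop)
    (hV : IsVariety V) (n : ℕ) (hn : 2 ≤ n) :
    (nfold (conPair (freeAlg V (Fin 2))
        (Quotient.mk (vSetoid V (Fin 2)) (Term.var (0 : Fin 2)))
        (Quotient.mk (vSetoid V (Fin 2)) (Term.var (1 : Fin 2)))) n <
      conPair (freeAlg V (Fin 2))
        (Quotient.mk (vSetoid V (Fin 2)) (Term.var (0 : Fin 2)))
        (Quotient.mk (vSetoid V (Fin 2)) (Term.var (1 : Fin 2)))) ↔
    (∃ A : Algebra σ, V A ∧ ∃ α β : Con A, α < β ∧ nfold β n ≤ α) := by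
  obtain ⟨m, rfl⟩ := Nat.exists_eq_add_of_le' (Nat.one_le_of_lt hn)
  exact free_algebra_supernilpotent_interval_general V (hV.freeAlg_mem (Fin 2)) m

end UA
end
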